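/- arXiv:1411.4796 — 2 statements merged into one kernel-verified Lean document; each statement's English description precedes it below -/
import Mathlib

section
/- In the 3-strand braid group B₃, the group homomorphism from the free group F₂ on two generators c, d to B₃ determined by c ↦ σ₁⁴ and d ↦ σ₂⁴ is injective; in particular, the subgroup of B₃ generated by σ₁⁴ and σ₂⁴ is a free group of rank 2. -/
/-- The braid relator `σ₁σ₂σ₁(σ₂σ₁σ₂)⁻¹` of the 3-strand braid group. -/
def braidRels3 : Set (FreeGroup (Fin 2)) :=
  {FreeGroup.of 0 * FreeGroup.of 1 * FreeGroup.of 0 *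
    (FreeGroup.of 1 * FreeGroup.of 0 * FreeGroup.of 1)⁻¹}

/-- The 3-strand braid group `B₃`, presented with generators `σ₁, σ₂` and the relation
`σ₁σ₂σ₁ = σ₂σ₁σ₂`. -/
abbrev B3 : Type := PresentedGroup braidRels3

/-- The generator `σ₁` of `B₃`. -/
def sigma1 : B3 := PresentedGroup.of (rels := braidRels3) 0

/-- The generator `σ₂` of `B₃`. -/
def sigma2 : B3 := PresentedGroup.of (rels := braidRels3) 1

/-- The group homomorphism `F₂ → B₃` determined by `c ↦ σ₁⁴` and `d ↦ σ₂⁴`, where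
`c = FreeGroup.of false` and `d = FreeGroup.of true`. -/
noncomputable def braidEmb : FreeGroup Bool →* B3 :=
  FreeGroup.lift fun b : Bool => if b then sigma2 ^ 4 else sigma1 ^ 4

/-!
The assignment `σ₁ ↦ (1 1; 0 1)`, `σ₂ ↦ (1 0; -1 1)` defines a homomorphism `B₃ → SL(2, ℤ)`, so it
suffices that the images of `σ₁ ^ m` and `σ₂ ^ n` freely generate when `4 ≤ |m * n|`. This is
ping-pong on `ℤ²` with the two cones separated by the lines `|m| * |y| = 2 * |x|`: every nontrivial
power of either image maps the other's cone into its own.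
-/

open Function ModularGroup
open scoped Pointwise MatrixGroups

theorem injective_lift_of_zpow_smul_subset {ι G α : Type*} [Nontrivial ι] [Group G]
    [MulAction G α] (a : ι → G) (X : ι → Set α) (hX : ∀ i, (X i).Nonempty)
    (hdisj : Pairwise (Disjoint on X))
    (hpp : Pairwise fun i j => ∀ k : ℤ, k ≠ 0 → a i ^ k • X j ⊆ X i) :
    Injective (FreeGroup.lift a) := by
  let powerHom (i : ι) : FreeGroup Unit →* G := FreeGroup.lift fun _ => a i
  have lift_eq : FreeGroup.lift a =
      (Monoid.CoprodI.lift powerHom).comp (freeGroupEquivCoprodI (ι := ι)).toMonoidHom := by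
    ext i
    simp [powerHom]
  have three_le_card : 3 ≤ Cardinal.mk (FreeGroup Unit) :=
    (Cardinal.natCast_lt_aleph0 (n := 3)).le.trans (Cardinal.aleph0_le_mk _)
  rw [lift_eq, MonoidHom.coe_comp]
  refine Injective.comp ?_ freeGroupEquivCoprodI.injective
  refine Monoid.CoprodI.lift_injective_of_ping_pong powerHom
    (.inr ⟨Classical.arbitrary ι, three_le_card⟩) X hX hdisj fun i j hij => ?_
  refine FreeGroup.freeGroupUnitEquivInt.forall_congr_left.mpr fun k hk => ?_
  have hk₀ : k ≠ 0 := by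
    rintro rfl
    exact hk (zpow_zero _)
  have powerHom_eq : powerHom i (FreeGroup.freeGroupUnitEquivInt.symm k) = a i ^ k := by
    change powerHom i (FreeGroup.of () ^ k) = a i ^ k
    rw [map_zpow, FreeGroup.lift_apply_of]
  rw [powerHom_eq]
  exact hpp hij k hk₀

theorem nonempty_closure_mulEquiv_freeGroup {ι G : Type*} [Group G] {a : ι → G}
    (ha : Injective (FreeGroup.lift a)) {s : Set G} (hs : Set.range a = s) :
    Nonempty (Subgroup.closure s ≃* FreeGroup ι) := by
  have range_lift : (FreeGroup.lift a).range = Subgroup.closure s :=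
    hs ▸ FreeGroup.range_lift_eq_closure
  exact ⟨((MonoidHom.ofInjective ha).trans (MulEquiv.subgroupCongr range_lift)).symm⟩

section OrderedRing

variable {R : Type*} [CommRing R] [LinearOrder R] [IsStrictOrderedRing R] {m n x y : R}

theorem mul_abs_lt_two_mul_abs_add_mul {c : R} (hc : |m| ≤ |c|) (h : 2 * |x| < |m| * |y|) :
    |m| * |y| < 2 * |x + c * y| := by
  have hcy : |m| * |y| ≤ |c * y| := by
    rw [abs_mul]
    gcongr
  have triangle : |c * y| ≤ |x + c * y| + |x| := by
    simpa using abs_sub (x + c * y) x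
  linarith

theorem two_mul_abs_lt_of_mul_abs_lt (hmn : 4 ≤ |m * n|) (h : |m| * |y| < 2 * |x|) :
    2 * |y| < |n| * |x| := by
  have hn : 0 < |n| := abs_pos.2 fun hn => by norm_num [hn] at hmn
  have doubled : 2 * (2 * |y|) < 2 * (|n| * |x|) :=
    calc 2 * (2 * |y|) = 4 * |y| := by ring
      _ ≤ |m * n| * |y| := by gcongr
      _ = |n| * (|m| * |y|) := by rw [abs_mul]; ring
      _ < |n| * (2 * |x|) := by gcongr
      _ = 2 * (|n| * |x|) := by ring
  linarith

end OrderedRing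

theorem T_zpow_smul (k : ℤ) (v : Fin 2 → ℤ) : T ^ k • v = ![v 0 + k * v 1, v 1] := by
  ext i
  fin_cases i <;> simp [Matrix.SpecialLinearGroup.smul_def, coe_T_zpow, Matrix.mulVec, dotProduct]

theorem S_conj_T_zpow_smul (k : ℤ) (v : Fin 2 → ℤ) :
    (S * T * S⁻¹) ^ k • v = ![v 0, v 1 - k * v 0] := by
  rw [conj_zpow]
  ext i
  fin_cases i <;>
    simp [Matrix.SpecialLinearGroup.smul_def, coe_T_zpow, coe_S, Matrix.mulVec, dotProduct,
      sub_eq_neg_add]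

/-- The ping-pong sets in `ℤ²`: the cone around the `x`-axis (index `false`) attracts the powers of
`T ^ m`, and the cone around the `y`-axis (index `true`) those of `(S * T * S⁻¹) ^ n`. The boundary
lines `|m| * |y| = 2 * |x|` are excluded from both. -/
def pingPongCone (m : ℤ) (b : Bool) : Set (Fin 2 → ℤ) :=
  {v | if b then 2 * |v 0| < |m| * |v 1| else |m| * |v 1| < 2 * |v 0|}

theorem pingPongCone_nonempty {m : ℤ} (hm : m ≠ 0) (b : Bool) : (pingPongCone m b).Nonempty := by
  cases b
  · exact ⟨![1, 0], by simp [pingPongCone]⟩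
  · exact ⟨![0, 1], by simpa [pingPongCone] using hm⟩

theorem pairwise_disjoint_pingPongCone (m : ℤ) : Pairwise (Disjoint on pingPongCone m) := by
  have cones_disjoint : Disjoint (pingPongCone m false) (pingPongCone m true) :=
    Set.disjoint_left.2 fun v (hv : |m| * |v 1| < 2 * |v 0|) => hv.asymm
  rintro (_ | _) (_ | _) hne
  exacts [absurd rfl hne, cones_disjoint, cones_disjoint.symm, absurd rfl hne]

theorem abs_le_abs_mul_of_ne_zero (m : ℤ) {k : ℤ} (hk : k ≠ 0) : |m| ≤ |m * k| := by
  rw [abs_mul]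
  exact le_mul_of_one_le_right (abs_nonneg m) (Int.one_le_abs hk)

theorem T_zpow_smul_pingPongCone_subset (m : ℤ) {k : ℤ} (hk : k ≠ 0) :
    (T ^ m) ^ k • pingPongCone m true ⊆ pingPongCone m false := by
  refine Set.smul_set_subset_iff.2 fun v hv => ?_
  have image_flat : |m| * |v 1| < 2 * |v 0 + m * k * v 1| :=
    mul_abs_lt_two_mul_abs_add_mul (abs_le_abs_mul_of_ne_zero m hk) hv
  rw [← zpow_mul, T_zpow_smul]
  simpa [pingPongCone] using image_flat

theorem S_conj_T_zpow_smul_pingPongCone_subset {m n k : ℤ} (hmn : 4 ≤ |m * n|) (hk : k ≠ 0) :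
    ((S * T * S⁻¹) ^ n) ^ k • pingPongCone m false ⊆ pingPongCone m true := by
  refine Set.smul_set_subset_iff.2 fun v hv => ?_
  -- `4 ≤ |m * n|` nests the cones cut out by `|n| * |x| = 2 * |y|` with the present ones, which
  -- reduces to the estimate for `T` with the coordinates exchanged.
  have hnk : |n| ≤ |-(n * k)| := by
    rw [abs_neg]
    exact abs_le_abs_mul_of_ne_zero n hk
  have image_steep_of_n : |n| * |v 0| < 2 * |v 1 + -(n * k) * v 0| :=
    mul_abs_lt_two_mul_abs_add_mul hnk (two_mul_abs_lt_of_mul_abs_lt hmn hv)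
  have image_steep : 2 * |v 0| < |m| * |v 1 + -(n * k) * v 0| :=
    two_mul_abs_lt_of_mul_abs_lt (mul_comm m n ▸ hmn) image_steep_of_n
  rw [← zpow_mul, S_conj_T_zpow_smul]
  simpa [pingPongCone, ← sub_eq_add_neg] using image_steep

theorem injective_lift_T_zpow_S_conj_T_zpow {m n : ℤ} (hmn : 4 ≤ |m * n|) :
    Injective (FreeGroup.lift fun b : Bool => if b then (S * T * S⁻¹) ^ n else T ^ m) := by
  have hm : m ≠ 0 := by
    rintro rfl
    norm_num at hmn
  refine injective_lift_of_zpow_smul_subset _ (pingPongCone m) (pingPongCone_nonempty hm)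
    (pairwise_disjoint_pingPongCone m) ?_
  rintro (_ | _) (_ | _) hne k hk
  · exact absurd rfl hne
  · exact T_zpow_smul_pingPongCone_subset m hk
  · exact S_conj_T_zpow_smul_pingPongCone_subset hmn hk
  · exact absurd rfl hne

theorem T_braid_S_conj_T : T * (S * T * S⁻¹) * T = S * T * S⁻¹ * T * (S * T * S⁻¹) := by
  decide

theorem lift_eq_one_of_mem_braidRels3 {G : Type*} [Group G] {f : Fin 2 → G}
    (hf : f 0 * f 1 * f 0 = f 1 * f 0 * f 1) : ∀ r ∈ braidRels3, FreeGroup.lift f r = 1 := by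
  rintro _ rfl
  rw [map_mul, map_inv, mul_inv_eq_one]
  simpa using hf

/-- The homomorphism `B₃ → SL(2, ℤ)` with `σ₁ ↦ T` and `σ₂ ↦ S * T * S⁻¹`, i.e. the reduced Burau
representation at `t = -1`. -/
noncomputable def burauNegOne : B3 →* SL(2, ℤ) :=
  PresentedGroup.toGroup (f := ![T, S * T * S⁻¹]) (lift_eq_one_of_mem_braidRels3 T_braid_S_conj_T)

theorem burauNegOne_sigma1 : burauNegOne sigma1 = T :=
  PresentedGroup.toGroup.of _

theorem burauNegOne_sigma2 : burauNegOne sigma2 = S * T * S⁻¹ :=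
  PresentedGroup.toGroup.of _

theorem injective_lift_sigma_zpow {m n : ℤ} (hmn : 4 ≤ |m * n|) :
    Injective (FreeGroup.lift fun b : Bool => if b then sigma2 ^ n else sigma1 ^ m) := by
  have burau_comp : burauNegOne.comp
      (FreeGroup.lift fun b : Bool => if b then sigma2 ^ n else sigma1 ^ m) =
      FreeGroup.lift fun b : Bool => if b then (S * T * S⁻¹) ^ n else T ^ m := by
    ext1 b
    cases b <;> simp [burauNegOne_sigma1, burauNegOne_sigma2]
  refine Injective.of_comp (f := burauNegOne) ?_
  rw [← MonoidHom.coe_comp, burau_comp]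
  exact injective_lift_T_zpow_S_conj_T_zpow hmn

theorem braid_B3_free_subgroup_general {m n : ℤ} (hmn : 4 ≤ |m * n|) :
    Injective (FreeGroup.lift fun b : Bool => if b then sigma2 ^ n else sigma1 ^ m) ∧
      Nonempty (Subgroup.closure ({sigma1 ^ m, sigma2 ^ n} : Set B3) ≃* FreeGroup Bool) := by
  have lift_injective := injective_lift_sigma_zpow hmn
  exact ⟨lift_injective, nonempty_closure_mulEquiv_freeGroup lift_injective (Bool.range_eq _)⟩

/-- The homomorphism `F₂ → B₃`, `c ↦ σ₁⁴`, `d ↦ σ₂⁴`, is injective; in particular, the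
subgroup of `B₃` generated by `σ₁⁴` and `σ₂⁴` is a free group of rank 2. -/
theorem braid_B3_free_subgroup :
    Function.Injective braidEmb ∧
      Nonempty ((Subgroup.closure ({sigma1 ^ 4, sigma2 ^ 4} : Set B3)) ≃* FreeGroup Bool) := by
  exact braid_B3_free_subgroup_general (m := 4) (n := 4) (by norm_num)
end

section
/- The 5-strand braid group B₅ contains the direct product of two free groups of rank 2 as a subgroup: the group homomorphism from F₂ × F₂ (the direct product of two copies of the free group on two generators) to B₅ sending the generators of the first factor to σ₁⁴ and σ₂⁴, and the generators of the second factor to σ₄² and d = σ₄σ₃σ₂σ₁²σ₂σ₃σ₄, is injective. -/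
open FreeGroup in
/-- The Artin relators of the 5-strand braid group: `σ_i σ_j = σ_j σ_i` for `|i − j| ≥ 2`
and `σ_i σ_{i+1} σ_i = σ_{i+1} σ_i σ_{i+1}` for `1 ≤ i ≤ 3`. -/
def braidRels5 : Set (FreeGroup (Fin 4)) :=
  {of 0 * of 2 * (of 2 * of 0)⁻¹,
   of 0 * of 3 * (of 3 * of 0)⁻¹,
   of 1 * of 3 * (of 3 * of 1)⁻¹,
   of 0 * of 1 * of 0 * (of 1 * of 0 * of 1)⁻¹,
   of 1 * of 2 * of 1 * (of 2 * of 1 * of 2)⁻¹,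
   of 2 * of 3 * of 2 * (of 3 * of 2 * of 3)⁻¹}

/-- The 5-strand braid group `B₅`, presented with generators `σ₁, σ₂, σ₃, σ₄` and the
Artin relations. -/
abbrev B5 : Type := PresentedGroup braidRels5

/-- The generator `σ_{i+1}` of `B₅` (so `sigma 0 = σ₁`, …, `sigma 3 = σ₄`). -/
def sigma (i : Fin 4) : B5 := PresentedGroup.of (rels := braidRels5) i

/-- The element `d = σ₄σ₃σ₂σ₁²σ₂σ₃σ₄` of `B₅`. -/
def dElt : B5 :=
  sigma 3 * sigma 2 * sigma 1 * sigma 0 ^ 2 * sigma 1 * sigma 2 * sigma 3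

/-!
`B₅` acts on `ℤ⁴`, the orthogonal sum of two symplectic planes, by transvections along a chain of
four vectors (the Burau representation at `t = -1`). Here `σ₁` and `σ₂` act on the first plane only
and `σ₄` on the second only. Moreover `d = Δ₅²Δ₄⁻²` is a full twist on five strands, which acts as
`-1`, times the inverse of a full twist on four strands, which acts as the square of a transvection
in the second plane. So up to signs the factors `F₂` act on different planes, each through powers
of the transvections along a basis. Such a pair plays ping-pong: if `|k * B u v| ≥ 2`, then the
`k`-th power of the transvection along `u` maps `|B v x| < |B u x|` into `|B u x| < |B v x|`. The
signs of `d` on the first plane are harmless: for a kernel element, the second plane already shows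
that its second component is trivial.
-/

section FreeGroup

open Function in
theorem injective_lift_of_zpow_ping_pong {ι G α : Type*} [Nontrivial ι] [Group G] [MulAction G α]
    (g : ι → G) (X : ι → Set α) (hne : ∀ i, (X i).Nonempty) (hdisj : Pairwise (Disjoint on X))
    (hmaps : Pairwise fun i j ↦ ∀ n : ℤ, n ≠ 0 → Set.MapsTo (g i ^ n • ·) (X j) (X i)) :
    Injective (FreeGroup.lift g) := by
  have hfactor : FreeGroup.lift g =
      (Monoid.CoprodI.lift fun i ↦ FreeGroup.lift fun _ : Unit ↦ g i).comp
        (freeGroupEquivCoprodI (ι := ι)).toMonoidHom := by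
    ext i
    simp
  rw [hfactor, MonoidHom.coe_comp]
  refine .comp ?_ (freeGroupEquivCoprodI (ι := ι)).injective
  have hinfinite : 3 ≤ Cardinal.mk (FreeGroup Unit) := by
    rw [FreeGroup.freeGroupUnitEquivInt.cardinal_eq, Cardinal.mk_denumerable]
    exact Cardinal.natCast_le_aleph0
  refine Monoid.CoprodI.lift_injective_of_ping_pong _ (.inr ⟨Classical.arbitrary ι, hinfinite⟩)
    X hne hdisj fun i j hij w hw ↦ ?_
  obtain ⟨n, rfl⟩ : ∃ n : ℤ, FreeGroup.of () ^ n = w :=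
    ⟨_, FreeGroup.freeGroupUnitEquivInt.symm_apply_apply w⟩
  have hn : n ≠ 0 := fun h ↦ hw (by rw [h, zpow_zero])
  rw [map_zpow, FreeGroup.lift_apply_of]
  exact (hmaps hij n hn).image_subset

theorem commute_lift_lift {α β G : Type*} [Group G] {f : α → G} {g : β → G}
    (h : ∀ i j, Commute (f i) (g j)) (u : FreeGroup α) (v : FreeGroup β) :
    Commute (FreeGroup.lift f u) (FreeGroup.lift g v) := by
  have hf : (FreeGroup.lift f).range ≤ Subgroup.centralizer (Set.range g) :=
    FreeGroup.range_lift_le <| by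
      rintro _ ⟨i, rfl⟩ _ ⟨j, rfl⟩
      exact (h i j).symm
  have hg : (FreeGroup.lift g).range ≤ Subgroup.centralizer (FreeGroup.lift f).range :=
    FreeGroup.range_lift_le <| by
      rintro _ ⟨j, rfl⟩ x hx
      exact (hf hx _ ⟨j, rfl⟩).symm
  exact hg ⟨v, rfl⟩ _ ⟨u, rfl⟩

end FreeGroup

theorem semiconjBy_of_braid {M : Type*} [Semigroup M] {a b : M} (h : a * b * a = b * a * b) :
    SemiconjBy (a * b) a b := by
  rw [SemiconjBy, h, mul_assoc]

section Automorphisms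

variable (R M N : Type*) [Semiring R] [AddCommMonoid M] [AddCommMonoid N] [Module R M] [Module R N]

/-- Block diagonal automorphisms of a product of modules. -/
def prodAut : (M ≃ₗ[R] M) × (N ≃ₗ[R] N) →* ((M × N) ≃ₗ[R] (M × N)) where
  toFun p := p.1.prodCongr p.2
  map_one' := rfl
  map_mul' _ _ := rfl

variable {R M N} in
@[simp]
theorem prodAut_apply (p : (M ≃ₗ[R] M) × (N ≃ₗ[R] N)) (x : M × N) :
    prodAut R M N p x = (p.1 x.1, p.2 x.2) := rfl

theorem prodAut_injective : Function.Injective (prodAut R M N) := by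
  rintro ⟨f, g⟩ ⟨f', g'⟩ h
  ext x
  · exact congr(($h (x, 0)).1)
  · exact congr(($h (0, x)).2)

end Automorphisms

section Transvections

variable {R V : Type*} [CommRing R] [AddCommGroup V] [Module R V] {B : LinearMap.BilinForm R V}

/-- The symplectic transvection `x ↦ x + B u x • u` along `u`. The convention `x ↦ x + B x u • u`
gives its inverse. -/
def symplecticTransvection (hB : B.IsAlt) (u : V) : V ≃ₗ[R] V :=
  LinearEquiv.transvection (hB u)

variable (hB : B.IsAlt) {u v : V}

@[simp]
theorem symplecticTransvection_apply (u x : V) :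
    symplecticTransvection hB u x = x + B u x • u := rfl

theorem symplecticTransvection_zpow_apply (u x : V) (n : ℤ) :
    (symplecticTransvection hB u ^ n) x = x + (n * B u x) • u := by
  have hinv (y : V) : (symplecticTransvection hB u)⁻¹ y = y - B u y • u := by
    rw [LinearEquiv.coe_inv, LinearEquiv.symm_apply_eq]
    simp [hB u]
  induction n generalizing x with
  | zero => simp
  | succ n ih =>
    rw [zpow_add_one, LinearEquiv.mul_apply, ih]
    simp only [symplecticTransvection_apply, map_add, map_smul, hB u, Int.cast_add, Int.cast_one]
    module
  | pred n ih =>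
    rw [zpow_sub_one, LinearEquiv.mul_apply, ih, hinv]
    simp only [map_sub, map_smul, hB u, Int.cast_sub, Int.cast_one]
    module

theorem symplecticTransvection_commute (h : B u v = 0) :
    Commute (symplecticTransvection hB u) (symplecticTransvection hB v) := by
  have h' : B v u = 0 := by rw [← hB.neg_eq, h, neg_zero]
  ext x
  simp [h, h', add_right_comm]

theorem symplecticTransvection_braid (h : B u v ^ 2 = 1) :
    symplecticTransvection hB u * symplecticTransvection hB v * symplecticTransvection hB u =
      symplecticTransvection hB v * symplecticTransvection hB u * symplecticTransvection hB v := by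
  have h' : B v u = - B u v := (hB.neg_eq u v).symm
  ext x
  simp only [LinearEquiv.mul_apply, symplecticTransvection_apply, map_add, map_smul, hB u, hB v, h']
  match_scalars
  · ring
  · linear_combination -B u x * h
  · linear_combination B v x * h

/-- The `k`-th power of the symplectic transvection along `u`, multiplied by the sign `ε`. Signs are
needed because the full twist on five strands acts as `-1`. -/
def signedTransvection (hB : B.IsAlt) (ε : ℤˣ) (u : V) (k : ℤ) : V ≃ₗ[R] V :=
  DistribMulAction.toModuleAut R V ε * symplecticTransvection hB u ^ k

theorem signedTransvection_zpow (ε : ℤˣ) (u : V) (k n : ℤ) :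
    signedTransvection hB ε u k ^ n = signedTransvection hB (ε ^ n) u (k * n) := by
  have hcomm : Commute (DistribMulAction.toModuleAut R V ε) (symplecticTransvection hB u ^ k) := by
    ext x
    simp
  rw [signedTransvection, hcomm.mul_zpow, ← map_zpow, ← zpow_mul, signedTransvection]

theorem signedTransvection_one_left (u : V) (k : ℤ) :
    signedTransvection hB 1 u k = symplecticTransvection hB u ^ k := by
  rw [signedTransvection, map_one, one_mul]

theorem signedTransvection_apply (ε : ℤˣ) (u x : V) (k : ℤ) :
    signedTransvection hB ε u k x = ε • (x + (k * B u x) • u) := by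
  rw [← symplecticTransvection_zpow_apply hB]
  rfl

theorem apply_self_signedTransvection (ε : ℤˣ) (u x : V) (k : ℤ) :
    B u (signedTransvection hB ε u k x) = ε • B u x := by
  simp [signedTransvection_apply, Units.smul_def, hB u]

theorem apply_signedTransvection (ε : ℤˣ) (u v x : V) (k : ℤ) :
    B v (signedTransvection hB ε u k x) = ε • (B v x - k * B u v * B u x) := by
  simp only [signedTransvection_apply, Units.smul_def, map_zsmul, map_add, map_smul,
    ← hB.neg_eq u v, smul_eq_mul]
  congr 1
  ring

end Transvections

section PingPong

variable {R V : Type*} [CommRing R] [LinearOrder R] [IsStrictOrderedRing R] [AddCommGroup V]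
  [Module R V] {B : LinearMap.BilinForm R V} (hB : B.IsAlt)

theorem abs_apply_lt_abs_apply_signedTransvection {u v x : V} {k : ℤ} (hk : 2 ≤ |k * B u v|)
    (hx : |B v x| < |B u x|) (ε : ℤˣ) :
    |B u (signedTransvection hB ε u k x)| < |B v (signedTransvection hB ε u k x)| := by
  have abs_unit_smul (r : R) : |ε • r| = |r| := by
    rcases Int.units_eq_one_or ε with rfl | rfl <;> simp
  rw [apply_self_signedTransvection, apply_signedTransvection, abs_unit_smul, abs_unit_smul]
  calc |B u x| < 2 * |B u x| - |B v x| := by linarith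
    _ ≤ |k * B u v| * |B u x| - |B v x| := by gcongr
    _ = |k * B u v * B u x| - |B v x| := by rw [abs_mul (k * B u v)]
    _ ≤ |k * B u v * B u x - B v x| := abs_sub_abs_le_abs_sub _ _
    _ = |B v x - k * B u v * B u x| := abs_sub_comm _ _

theorem injective_lift_signedTransvection {u : Bool → V} {k : Bool → ℤ}
    (hk : ∀ i, 2 ≤ |k i * B (u i) (u !i)|) (ε : Bool → ℤˣ) :
    Function.Injective (FreeGroup.lift fun i ↦ signedTransvection hB (ε i) (u i) (k i)) := by
  refine injective_lift_of_zpow_ping_pong _ (fun i ↦ {x | |B (u i) x| < |B (u !i) x|}) ?_ ?_ ?_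
  · intro i
    have hne : B (u !i) (u i) ≠ 0 := fun h ↦ by simpa [h] using (hk !i).trans_lt' two_pos
    exact ⟨u i, by simpa [hB (u i)] using hne⟩
  · intro i j hij
    obtain rfl := Bool.eq_not.2 hij.symm
    exact Set.disjoint_left.2 fun x hx hx' ↦ lt_asymm hx (by simpa using hx')
  · intro i j hij n hn x hx
    obtain rfl := Bool.eq_not.2 hij.symm
    have hn' : (1 : R) ≤ |(n : R)| := by exact_mod_cast Int.one_le_abs hn
    have hkn : 2 ≤ |((k i * n : ℤ) : R) * B (u i) (u !i)| :=
      calc 2 ≤ |k i * B (u i) (u !i)| := hk i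
        _ ≤ |k i * B (u i) (u !i)| * |(n : R)| := le_mul_of_one_le_right (abs_nonneg _) hn'
        _ = |((k i * n : ℤ) : R) * B (u i) (u !i)| := by
          rw [← abs_mul, Int.cast_mul, mul_right_comm]
    simpa [signedTransvection_zpow] using
      abs_apply_lt_abs_apply_signedTransvection hB hkn (by simpa using hx) (ε i ^ n)

end PingPong

theorem noncommCoprod_lift_injective_of_triangular {X Y G K L P : Type*} [Group G] [Group K]
    [Group L] [Group P] {f : X → G} {g : Y → G} (hfg : ∀ i j, Commute (f i) (g j)) (π : G →* P)
    {ι : K × L →* P} (hι : Function.Injective ι) {α : X → K} {s : Y → K} {β : Y → L}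
    (hf : ∀ i, π (f i) = ι (α i, 1)) (hg : ∀ j, π (g j) = ι (s j, β j))
    (hα : Function.Injective (FreeGroup.lift α)) (hβ : Function.Injective (FreeGroup.lift β)) :
    Function.Injective
      ((FreeGroup.lift f).noncommCoprod (FreeGroup.lift g) (commute_lift_lift hfg)) := by
  have hf' : π.comp (FreeGroup.lift f) = ι.comp ((FreeGroup.lift α).prod 1) := by
    ext i
    simp [hf]
  have hg' : π.comp (FreeGroup.lift g) =
      ι.comp ((FreeGroup.lift s).prod (FreeGroup.lift β)) := by
    ext j
    simp [hg]
  refine (injective_iff_map_eq_one _).2 fun ⟨u, v⟩ huv ↦ ?_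
  have hblock : (FreeGroup.lift α u, 1) * (FreeGroup.lift s v, FreeGroup.lift β v) = 1 := hι <|
    calc ι ((FreeGroup.lift α u, 1) * (FreeGroup.lift s v, FreeGroup.lift β v))
        = π (FreeGroup.lift f u) * π (FreeGroup.lift g v) := by
          rw [map_mul]
          exact congr($(DFunLike.congr_fun hf' u) * $(DFunLike.congr_fun hg' v)).symm
      _ = π 1 := by rw [← map_mul, ← huv, MonoidHom.noncommCoprod_apply]
      _ = ι 1 := by rw [map_one, map_one]
  obtain rfl : v = 1 := (map_eq_one_iff _ hβ).1 (by simpa using congr(($hblock).2))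
  obtain rfl : u = 1 := (map_eq_one_iff _ hα).1 (by simpa using congr(($hblock).1))
  rfl

section SymplecticForms

/-- The standard symplectic form of the plane `R × R`. -/
def areaForm (R : Type*) [CommRing R] : LinearMap.BilinForm R (R × R) :=
  (LinearMap.mul R R).compl₁₂ (.fst R R R) (.snd R R R) -
    (LinearMap.mul R R).compl₁₂ (.snd R R R) (.fst R R R)

@[simp]
theorem areaForm_apply {R : Type*} [CommRing R] (x y : R × R) :
    areaForm R x y = x.1 * y.2 - x.2 * y.1 := rfl

theorem areaForm_isAlt (R : Type*) [CommRing R] : (areaForm R).IsAlt := fun x ↦ by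
  rw [areaForm_apply, mul_comm, sub_self]

variable {R M N : Type*} [CommRing R] [AddCommGroup M] [AddCommGroup N] [Module R M] [Module R N]
  {B : LinearMap.BilinForm R M} {C : LinearMap.BilinForm R N}

/-- The orthogonal direct sum of two bilinear forms, on the product of their modules. -/
def orthogonalSum (B : LinearMap.BilinForm R M) (C : LinearMap.BilinForm R N) :
    LinearMap.BilinForm R (M × N) :=
  B.compl₁₂ (.fst R M N) (.fst R M N) + C.compl₁₂ (.snd R M N) (.snd R M N)

@[simp]
theorem orthogonalSum_apply (x y : M × N) :
    orthogonalSum B C x y = B x.1 y.1 + C x.2 y.2 := rfl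

theorem orthogonalSum_isAlt (hB : B.IsAlt) (hC : C.IsAlt) : (orthogonalSum B C).IsAlt :=
  fun x ↦ by rw [orthogonalSum_apply, hB x.1, hC x.2, add_zero]

theorem symplecticTransvection_inl (hB : B.IsAlt) (hC : C.IsAlt) (u : M) :
    symplecticTransvection (orthogonalSum_isAlt hB hC) (u, 0) =
      prodAut R M N (symplecticTransvection hB u, 1) := by
  ext x <;> simp

theorem symplecticTransvection_inr (hB : B.IsAlt) (hC : C.IsAlt) (v : N) :
    symplecticTransvection (orthogonalSum_isAlt hB hC) (0, v) =
      prodAut R M N (1, symplecticTransvection hC v) := by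
  ext x <;> simp

end SymplecticForms

section BraidRelations

open FreeGroup in
theorem sigma_commute {i j : Fin 4} (h : i.val + 2 ≤ j.val) : Commute (sigma i) (sigma j) := by
  have hrel : of i * of j * (of j * of i)⁻¹ ∈ braidRels5 := by
    fin_cases i <;> fin_cases j <;> simp_all [braidRels5]
  exact mul_inv_eq_one.1 (PresentedGroup.one_of_mem hrel)

open FreeGroup in
theorem sigma_braid (i : Fin 3) :
    sigma i.castSucc * sigma i.succ * sigma i.castSucc =
      sigma i.succ * sigma i.castSucc * sigma i.succ := by
  have hrel : of i.castSucc * of i.succ * of i.castSucc *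
      (of i.succ * of i.castSucc * of i.succ)⁻¹ ∈ braidRels5 := by
    fin_cases i <;> simp [braidRels5]
  exact mul_inv_eq_one.1 (PresentedGroup.one_of_mem hrel)

/- `σ₁σ₂σ₃σ₄` conjugates `σ_i` to `σ_{i+1}` and `σ₄σ₃σ₂σ₁` conjugates it back, so their product `d`
commutes with `σ₁` and `σ₂`. -/
theorem dElt_eq :
    dElt = sigma 3 * sigma 2 * sigma 1 * sigma 0 * (sigma 0 * sigma 1 * sigma 2 * sigma 3) := by
  simp only [dElt, sq, mul_assoc]

theorem sigma_zero_commute_dElt : Commute (sigma 0) dElt := by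
  have h02 : Commute (sigma 2) (sigma 0) := (sigma_commute (by decide)).symm
  have h03 : Commute (sigma 3) (sigma 0) := (sigma_commute (by decide)).symm
  have hbraid : sigma 0 * sigma 1 * sigma 0 = sigma 1 * sigma 0 * sigma 1 := sigma_braid 0
  have hup : SemiconjBy (sigma 0 * sigma 1 * sigma 2 * sigma 3) (sigma 0) (sigma 1) :=
    ((semiconjBy_of_braid hbraid).mul_left h02).mul_left h03
  have hdown : SemiconjBy (sigma 3 * sigma 2 * sigma 1 * sigma 0) (sigma 1) (sigma 0) := by
    rw [mul_assoc]
    exact SemiconjBy.mul_left (h03.mul_left h02) (semiconjBy_of_braid hbraid.symm)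
  rw [dElt_eq]
  exact (hdown.mul_left hup).symm

theorem sigma_one_commute_dElt : Commute (sigma 1) dElt := by
  have h02 : Commute (sigma 0) (sigma 2) := sigma_commute (by decide)
  have h13 : Commute (sigma 3) (sigma 1) := (sigma_commute (by decide)).symm
  have hbraid : sigma 1 * sigma 2 * sigma 1 = sigma 2 * sigma 1 * sigma 2 := sigma_braid 1
  have hup : SemiconjBy (sigma 0 * sigma 1 * sigma 2 * sigma 3) (sigma 1) (sigma 2) := by
    rw [mul_assoc (sigma 0)]
    exact (SemiconjBy.mul_left h02 (semiconjBy_of_braid hbraid)).mul_left h13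
  have hdown : SemiconjBy (sigma 3 * sigma 2 * sigma 1 * sigma 0) (sigma 2) (sigma 1) := by
    rw [mul_assoc (sigma 3)]
    exact (SemiconjBy.mul_left h13 (semiconjBy_of_braid hbraid.symm)).mul_left h02
  rw [dElt_eq]
  exact (hdown.mul_left hup).symm

end BraidRelations

section Representation

/-- A basis of `ℤ⁴` in which consecutive vectors pair to `±1` under
`orthogonalSum (areaForm ℤ) (areaForm ℤ)` and all others are orthogonal. The coordinates are chosen
so that the first two vectors span the first plane and the last one lies in the second plane. -/
def chainVector : Fin 4 → (ℤ × ℤ) × ℤ × ℤ :=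
  ![((1, 0), 0), ((0, 1), 0), ((-1, 0), (0, 1)), (0, (1, 0))]

/-- The image of the generator `σ_{i+1}` under `symplecticRep`. -/
def chainTransvection (i : Fin 4) : ((ℤ × ℤ) × ℤ × ℤ) ≃ₗ[ℤ] (ℤ × ℤ) × ℤ × ℤ :=
  symplecticTransvection (orthogonalSum_isAlt (areaForm_isAlt ℤ) (areaForm_isAlt ℤ)) (chainVector i)

theorem lift_chainTransvection_eq_one :
    ∀ r ∈ braidRels5, FreeGroup.lift chainTransvection r = 1 := by
  simp only [braidRels5, Set.forall_mem_insert, Set.mem_singleton_iff, forall_eq, map_mul,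
    map_inv, FreeGroup.lift_apply_of, mul_inv_eq_one]
  refine ⟨?_, ?_, ?_, ?_, ?_, ?_⟩
  iterate 3 exact symplecticTransvection_commute _ (by decide)
  iterate 3 exact symplecticTransvection_braid _ (by decide)

/-- The integral Burau representation of `B₅` at `t = -1`: each generator acts as a symplectic
transvection along a vector of a chain. -/
def symplecticRep : B5 →* ((ℤ × ℤ) × ℤ × ℤ) ≃ₗ[ℤ] (ℤ × ℤ) × ℤ × ℤ :=
  PresentedGroup.toGroup lift_chainTransvection_eq_one

theorem symplecticRep_sigma (i : Fin 4) : symplecticRep (sigma i) = chainTransvection i :=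
  PresentedGroup.toGroup.of lift_chainTransvection_eq_one

theorem symplecticRep_dElt :
    symplecticRep dElt = prodAut ℤ (ℤ × ℤ) (ℤ × ℤ)
      (DistribMulAction.toModuleAut ℤ (ℤ × ℤ) (-1 : ℤˣ),
        signedTransvection (areaForm_isAlt ℤ) (-1) (0, 1) (-2)) := by
  simp only [dElt, map_mul, map_pow, symplecticRep_sigma]
  refine LinearEquiv.toLinearMap_injective ?_
  ext <;> simp [chainTransvection, chainVector, signedTransvection_apply, sq]

/-- The standard basis of the plane, indexed by the generators of `F₂`. -/
def stdVec (i : Bool) : ℤ × ℤ := bif i then (0, 1) else (1, 0)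

theorem injective_lift_signedTransvection_stdVec {k : Bool → ℤ} (hk : ∀ i, 2 ≤ |k i|)
    (ε : Bool → ℤˣ) :
    Function.Injective (FreeGroup.lift fun i ↦
      signedTransvection (areaForm_isAlt ℤ) (ε i) (stdVec i) (k i)) :=
  injective_lift_signedTransvection _ (fun i ↦ by cases i <;> simpa [stdVec] using hk _) ε

/-- The elements `σ₁`, `σ₂` whose powers generate the first free factor. -/
def firstGenerator (i : Bool) : B5 := bif i then sigma 1 else sigma 0

/-- The elements `σ₄`, `d` whose powers generate the second free factor. -/
def secondGenerator (i : Bool) : B5 := bif i then dElt else sigma 3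

theorem firstGenerator_commute_secondGenerator (i j : Bool) :
    Commute (firstGenerator i) (secondGenerator j) := by
  cases i <;> cases j
  · exact sigma_commute (by decide)
  · exact sigma_zero_commute_dElt
  · exact sigma_commute (by decide)
  · exact sigma_one_commute_dElt

theorem symplecticRep_firstGenerator_zpow (i : Bool) (k : ℤ) :
    symplecticRep (firstGenerator i ^ k) = prodAut ℤ (ℤ × ℤ) (ℤ × ℤ)
      (signedTransvection (areaForm_isAlt ℤ) 1 (stdVec i) k, 1) := by
  have hgen : symplecticRep (firstGenerator i) = prodAut ℤ (ℤ × ℤ) (ℤ × ℤ)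
      (symplecticTransvection (areaForm_isAlt ℤ) (stdVec i), 1) := by
    cases i <;> exact (symplecticRep_sigma _).trans
      (symplecticTransvection_inl (areaForm_isAlt ℤ) (areaForm_isAlt ℤ) _)
  rw [map_zpow, hgen, ← map_zpow, Prod.pow_mk, one_zpow, signedTransvection_one_left]

theorem symplecticRep_secondGenerator_zpow (i : Bool) (k : ℤ) :
    symplecticRep (secondGenerator i ^ k) = prodAut ℤ (ℤ × ℤ) (ℤ × ℤ)
      (DistribMulAction.toModuleAut ℤ (ℤ × ℤ) ((bif i then -1 else 1 : ℤˣ) ^ k),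
        signedTransvection (areaForm_isAlt ℤ) ((bif i then -1 else 1) ^ k) (stdVec i)
          ((bif i then -2 else 1) * k)) := by
  have hgen : symplecticRep (secondGenerator i) = prodAut ℤ (ℤ × ℤ) (ℤ × ℤ)
      (DistribMulAction.toModuleAut ℤ (ℤ × ℤ) (bif i then -1 else 1 : ℤˣ),
        signedTransvection (areaForm_isAlt ℤ) (bif i then -1 else 1) (stdVec i)
          (bif i then -2 else 1)) := by
    cases i
    · simp only [cond_false, map_one, signedTransvection_one_left, zpow_one]
      exact (symplecticRep_sigma 3).trans
        (symplecticTransvection_inr (areaForm_isAlt ℤ) (areaForm_isAlt ℤ) _)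
    · exact symplecticRep_dElt
  rw [map_zpow, hgen, ← map_zpow, Prod.pow_mk, signedTransvection_zpow, map_zpow]

end Representation

theorem braid_B5_contains_product_of_free_groups_general {k l m n : ℤ} (hk : 2 ≤ |k|)
    (hl : 2 ≤ |l|) (hm : 2 ≤ |m|) (hn : n ≠ 0) :
    ∃ φ : FreeGroup Bool × FreeGroup Bool →* B5,
      φ (FreeGroup.of false, 1) = sigma 0 ^ k ∧
      φ (FreeGroup.of true, 1) = sigma 1 ^ l ∧
      φ (1, FreeGroup.of false) = sigma 3 ^ m ∧
      φ (1, FreeGroup.of true) = dElt ^ n ∧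
      Function.Injective φ := by
  let p (i : Bool) : ℤ := bif i then l else k
  let q (i : Bool) : ℤ := bif i then n else m
  have hp (i : Bool) : 2 ≤ |p i| := by cases i <;> assumption
  have hq (i : Bool) : 2 ≤ |(bif i then -2 else 1) * q i| := by
    cases i
    · simpa [q] using hm
    · have := Int.one_le_abs hn
      simp only [q, cond_true, abs_mul, abs_neg, Nat.abs_ofNat]
      linarith
  have hcomm (i j : Bool) : Commute (firstGenerator i ^ p i) (secondGenerator j ^ q j) :=
    (firstGenerator_commute_secondGenerator i j).zpow_zpow _ _
  refine ⟨.noncommCoprod _ _ (commute_lift_lift hcomm), ?_, ?_, ?_, ?_,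
    noncommCoprod_lift_injective_of_triangular hcomm symplecticRep (prodAut_injective _ _ _)
      (fun i ↦ symplecticRep_firstGenerator_zpow i _)
      (fun j ↦ symplecticRep_secondGenerator_zpow j _)
      (injective_lift_signedTransvection_stdVec hp _)
      (injective_lift_signedTransvection_stdVec hq _)⟩
  all_goals simp [firstGenerator, secondGenerator, p, q]

/-- `B₅` contains the direct product of two free groups of rank 2 as a subgroup: the group
homomorphism `F₂ × F₂ → B₅` sending the generators of the first factor to `σ₁⁴` and `σ₂⁴`
and the generators of the second factor to `σ₄²` and `d = σ₄σ₃σ₂σ₁²σ₂σ₃σ₄` is injective. -/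
theorem braid_B5_contains_product_of_free_groups :
    ∃ φ : FreeGroup Bool × FreeGroup Bool →* B5,
      φ (FreeGroup.of false, 1) = sigma 0 ^ 4 ∧
      φ (FreeGroup.of true, 1) = sigma 1 ^ 4 ∧
      φ (1, FreeGroup.of false) = sigma 3 ^ 2 ∧
      φ (1, FreeGroup.of true) = dElt ∧
      Function.Injective φ := by
  simpa only [zpow_ofNat, pow_one] using braid_B5_contains_product_of_free_groups_general
    (k := 4) (l := 4) (m := 2) (n := 1) (by decide) (by decide) (by decide) (by decide)
end
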